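/- Let 𝒦 be a simplicial complex over S having faces of arbitrarily large cardinality (i.e., 𝒦 is infinite-dimensional). Then 𝒦 is an accumulation point for the distance d: for every n ≥ 1 there exists a simplicial complex 𝒦ₙ over S with 𝒦ₙ ≠ 𝒦 and 0 < d(𝒦, 𝒦ₙ) ≤ 1/n. -/

import Mathlib

open scoped BigOperators

/-- A simplicial complex over the vertex set `S`: a nonempty collection of
nonempty finite subsets of `S`, closed under taking nonempty subsets. -/
def IsSimplicialComplex {S : Type*} (K : Set (Finset S)) : Prop :=
  K.Nonempty ∧ (∀ F ∈ K, F.Nonempty) ∧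
    ∀ F ∈ K, ∀ G : Finset S, G.Nonempty → G ⊆ F → G ∈ K

/-- Halved ℓ¹ distance between finitely supported real functions:
`d(α,β) = (1/2) ∑ₛ |α s - β s|`. -/
noncomputable def l1dist {S : Type*} (α β : S →₀ ℝ) : ℝ :=
  (1 / 2) * (α - β).sum fun _ x => |x|

/-- The ℓ¹ geometric realization of a collection `K` of finite subsets of `S`:
finitely supported probability vectors whose support is a face of `K`. -/
def realization {S : Type*} (K : Set (Finset S)) : Set (S →₀ ℝ) :=
  {α | (∀ s, 0 ≤ α s) ∧ (α.sum fun _ x => x) = 1 ∧ α.support ∈ K}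

/-- Distance from a point to a set of finitely supported functions. -/
noncomputable def distToSet {S : Type*} (α : S →₀ ℝ) (X : Set (S →₀ ℝ)) : ℝ :=
  sInf (l1dist α '' X)

/-- One-sided Hausdorff distance between (the realizations of) two complexes. -/
noncomputable def hdelta {S : Type*} (K₁ K₂ : Set (Finset S)) : ℝ :=
  sSup ((fun α => distToSet α (realization K₂)) '' realization K₁)

/-- Hausdorff distance between (the realizations of) two simplicial complexes. -/
noncomputable def hdist {S : Type*} (K₁ K₂ : Set (Finset S)) : ℝ :=
  max (hdelta K₁ K₂) (hdelta K₂ K₁)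

/-- `d(F, K)`: supremum of distances to `|K|₁` over probability vectors
supported exactly on `F`. -/
noncomputable def dFace {S : Type*} (F : Finset S) (K : Set (Finset S)) : ℝ :=
  sSup ((fun α => distToSet α (realization K)) ''
    {α : S →₀ ℝ | (∀ s, 0 ≤ α s) ∧ (α.sum fun _ x => x) = 1 ∧ α.support = F})

/-- The `n`-skeleton of a simplicial complex. -/
def skeleton {S : Type*} (n : ℕ) (K : Set (Finset S)) : Set (Finset S) :=
  {F | F ∈ K ∧ F.card ≤ n + 1}

/-!
If `F` is a face of `K` with `m ≥ 2` vertices, then deleting from `K` every face that contains `F`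
gives a complex at distance exactly `1 / m`. A point of `|K|₁` has a coordinate at most `1 / m`
at some vertex of `F`, and moving that mass to another vertex of `F` costs at most `1 / m`.
Conversely, a point of the deletion vanishes at some vertex of `F`, where the barycenter of `F` has
mass `1 / m`, and for probability vectors the halved ℓ¹ distance is the total variation distance,
which dominates the difference of masses at any single vertex.
-/

section MoveMass

variable {S M : Type*} [AddCommMonoid M]

/-- The function obtained from `α` by transferring the whole mass of the vertex `s` to the
vertex `t`; for `s ≠ t` it is used to push a point of a realization off the star of `s`. -/
noncomputable def moveMass (α : S →₀ M) (s t : S) : S →₀ M :=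
  α.erase s + Finsupp.single t (α s)

lemma moveMass_apply_self (α : S →₀ M) {s t : S} (hst : s ≠ t) : moveMass α s t s = 0 := by
  simp [moveMass, Finsupp.single_eq_of_ne hst]

lemma degree_moveMass (α : S →₀ M) (s t : S) : (moveMass α s t).degree = α.degree := by
  rw [← congrArg Finsupp.degree (Finsupp.erase_add_single s α)]
  simp only [moveMass, map_add, Finsupp.degree_single]

lemma support_moveMass_subset {α : S →₀ M} (s : S) {t : S} (ht : t ∈ α.support) :
    (moveMass α s t).support ⊆ α.support := by
  classical
  refine Finsupp.support_add.trans (Finset.union_subset ?_ ?_)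
  · exact Finsupp.support_erase.trans_subset (Finset.erase_subset _ _)
  · exact Finsupp.support_single_subset.trans (Finset.singleton_subset_iff.mpr ht)

lemma moveMass_nonneg [PartialOrder M] [IsOrderedAddMonoid M] {α : S →₀ M} (hα : 0 ≤ α)
    (s t : S) : 0 ≤ moveMass α s t := by
  classical
  refine add_nonneg (fun x => ?_) (Finsupp.single_nonneg.mpr (hα s))
  rw [Finsupp.erase_apply]
  split_ifs
  exacts [le_rfl, hα x]

end MoveMass

lemma sum_le_degree {S M : Type*} [AddCommMonoid M] [PartialOrder M] [IsOrderedAddMonoid M]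
    {α : S →₀ M} (hα : 0 ≤ α) (F : Finset S) : ∑ s ∈ F, α s ≤ α.degree := by
  classical
  calc ∑ s ∈ F, α s ≤ ∑ s ∈ F ∪ α.support, α s :=
        Finset.sum_le_sum_of_subset_of_nonneg Finset.subset_union_left fun s _ _ => hα s
    _ = α.degree := (Finsupp.sum_of_support_subset α Finset.subset_union_right
        (fun _ x => x) fun _ _ => rfl).symm

lemma exists_mem_apply_le_degree_div_card {S 𝕜 : Type*} [Field 𝕜] [LinearOrder 𝕜]
    [IsStrictOrderedRing 𝕜] {α : S →₀ 𝕜} (hα : 0 ≤ α) {F : Finset S} (hF : F.Nonempty) :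
    ∃ s ∈ F, α s ≤ α.degree / F.card := by
  refine Finset.exists_le_of_sum_le hF ((sum_le_degree hα F).trans_eq ?_)
  rw [Finset.sum_const, nsmul_eq_mul,
    mul_div_cancel₀ _ (Nat.cast_ne_zero.mpr hF.card_pos.ne')]

section Distance

variable {S : Type*} {α β : S →₀ ℝ} {X : Set (S →₀ ℝ)} {s t : S}

lemma l1dist_nonneg (α β : S →₀ ℝ) : 0 ≤ l1dist α β :=
  mul_nonneg (by norm_num) (Finset.sum_nonneg fun _ _ => abs_nonneg _)

lemma l1dist_self (α : S →₀ ℝ) : l1dist α α = 0 := by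
  simp [l1dist]

lemma l1dist_add_left (γ α β : S →₀ ℝ) : l1dist (γ + α) (γ + β) = l1dist α β := by
  rw [l1dist, l1dist, add_sub_add_left_eq_sub]

lemma l1dist_single_single (hst : s ≠ t) (c : ℝ) :
    l1dist (Finsupp.single s c) (Finsupp.single t c) = |c| := by
  classical
  have hsupp : (Finsupp.single s c - Finsupp.single t c).support ⊆ {s, t} :=
    Finsupp.support_sub.trans
      (Finset.union_subset_union Finsupp.support_single_subset Finsupp.support_single_subset)
  rw [l1dist, Finsupp.sum_of_support_subset _ hsupp _ fun _ _ => abs_zero, Finset.sum_pair hst]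
  simp only [Finsupp.sub_apply, Finsupp.single_eq_same, Finsupp.single_eq_of_ne hst,
    Finsupp.single_eq_of_ne hst.symm, sub_zero, zero_sub, abs_neg]
  ring

lemma l1dist_moveMass (α : S →₀ ℝ) (hst : s ≠ t) : l1dist α (moveMass α s t) = |α s| := by
  calc l1dist α (moveMass α s t)
      = l1dist (α.erase s + Finsupp.single s (α s)) (α.erase s + Finsupp.single t (α s)) := by
        rw [Finsupp.erase_add_single, moveMass]
    _ = |α s| := by rw [l1dist_add_left, l1dist_single_single hst]

lemma sub_apply_le_l1dist (h : α.degree = β.degree) (s : S) : α s - β s ≤ l1dist α β := by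
  set γ := α - β with hγ
  have hγ_sum : ∑ x ∈ γ.support, γ x = 0 := by
    rw [← Finsupp.degree_apply, hγ, map_sub, h, sub_self]
  by_cases hs : s ∈ γ.support
  · have hle : |γ s| + γ s ≤ ∑ x ∈ γ.support, |γ x| :=
      calc |γ s| + γ s ≤ ∑ x ∈ γ.support, (|γ x| + γ x) :=
            Finset.single_le_sum (f := fun x => |γ x| + γ x)
              (fun x _ => neg_le_iff_add_nonneg.mp (neg_le_abs (γ x))) hs
        _ = ∑ x ∈ γ.support, |γ x| := by rw [Finset.sum_add_distrib, hγ_sum, add_zero]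
    calc α s - β s = γ s := rfl
      _ ≤ 1 / 2 * ∑ x ∈ γ.support, |γ x| := by linarith [le_abs_self (γ s)]
  · exact (Finsupp.notMem_support_iff.mp hs).trans_le (l1dist_nonneg α β)

lemma distToSet_nonneg (α : S →₀ ℝ) (X : Set (S →₀ ℝ)) : 0 ≤ distToSet α X :=
  Real.sInf_nonneg (Set.forall_mem_image.mpr fun β _ => l1dist_nonneg α β)

lemma distToSet_le_l1dist (hβ : β ∈ X) : distToSet α X ≤ l1dist α β :=
  csInf_le ⟨0, Set.forall_mem_image.mpr fun γ _ => l1dist_nonneg α γ⟩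
    (Set.mem_image_of_mem _ hβ)

lemma distToSet_eq_zero_of_mem (hα : α ∈ X) : distToSet α X = 0 :=
  le_antisymm ((distToSet_le_l1dist hα).trans_eq (l1dist_self α)) (distToSet_nonneg α X)

end Distance

section Realization

variable {S : Type*} {K K₁ K₂ : Set (Finset S)} {F : Finset S} {α : S →₀ ℝ} {s t : S}

lemma mem_realization_iff :
    α ∈ realization K ↔ 0 ≤ α ∧ α.degree = 1 ∧ α.support ∈ K :=
  Iff.rfl

lemma realization_mono (h : K₁ ⊆ K₂) : realization K₁ ⊆ realization K₂ :=
  fun _ hα => ⟨hα.1, hα.2.1, h hα.2.2⟩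

lemma hdelta_eq_zero_of_subset (h : K₁ ⊆ K₂) : hdelta K₁ K₂ = 0 :=
  le_antisymm
    (Real.sSup_le (Set.forall_mem_image.mpr fun _ hα =>
      (distToSet_eq_zero_of_mem (realization_mono h hα)).le) le_rfl)
    (Real.sSup_nonneg (Set.forall_mem_image.mpr fun _ _ => distToSet_nonneg _ _))

lemma moveMass_mem_realization (hK : IsSimplicialComplex K) (hα : α ∈ realization K)
    (ht : t ∈ α.support) : moveMass α s t ∈ realization K := by
  obtain ⟨hα_nonneg, hα_degree, hα_supp⟩ := mem_realization_iff.mp hα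
  have hdegree : (moveMass α s t).degree = 1 := (degree_moveMass α s t).trans hα_degree
  have hne : moveMass α s t ≠ 0 := by
    intro h
    rw [h, map_zero] at hdegree
    exact zero_ne_one hdegree
  exact ⟨moveMass_nonneg hα_nonneg s t, hdegree, hK.2.2 _ hα_supp _
    (Finsupp.support_nonempty_iff.mpr hne) (support_moveMass_subset s ht)⟩

/-- The barycenter of the face `F`, i.e. the uniform probability vector on `F`; it attains
the distance between a complex and its deletion of `F`. For `F = ∅` it is `0`. -/
noncomputable def barycenter (F : Finset S) : S →₀ ℝ :=
  Finsupp.indicator F fun _ _ => 1 / (F.card : ℝ)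

lemma barycenter_apply_of_mem (hs : s ∈ F) : barycenter F s = 1 / (F.card : ℝ) :=
  Finsupp.indicator_of_mem hs _

lemma barycenter_nonneg (F : Finset S) : 0 ≤ barycenter F := by
  classical
  intro s
  rw [barycenter, Finsupp.indicator_apply]
  split_ifs
  exacts [by positivity, le_rfl]

lemma support_barycenter (F : Finset S) : (barycenter F).support = F := by
  refine (Finsupp.support_indicator_subset F _).antisymm fun s hs => ?_
  refine Finsupp.mem_support_iff.mpr ((barycenter_apply_of_mem hs).trans_ne ?_)
  exact one_div_ne_zero (Nat.cast_ne_zero.mpr (Finset.card_ne_zero_of_mem hs))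

lemma degree_barycenter (hF : F.Nonempty) : (barycenter F).degree = 1 := by
  rw [Finsupp.degree_apply, support_barycenter,
    Finset.sum_congr rfl fun _ hs => barycenter_apply_of_mem hs, Finset.sum_const, nsmul_eq_mul,
    mul_one_div_cancel (Nat.cast_ne_zero.mpr hF.card_pos.ne')]

lemma barycenter_mem_realization (hF : F ∈ K) (hne : F.Nonempty) :
    barycenter F ∈ realization K :=
  ⟨barycenter_nonneg F, degree_barycenter hne, (support_barycenter F).symm ▸ hF⟩

lemma IsSimplicialComplex.realization_nonempty (hK : IsSimplicialComplex K) :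
    (realization K).Nonempty :=
  let ⟨F, hF⟩ := hK.1
  ⟨barycenter F, barycenter_mem_realization hF (hK.2.1 F hF)⟩

end Realization

section FaceDeletion

variable {S : Type*} {K : Set (Finset S)} {F : Finset S} {α : S →₀ ℝ}

/-- The deletion of the face `F` from `K`: the faces of `K` that do not contain `F`, i.e. what
remains of `K` once the open star of `F` is removed. -/
def faceDeletion (K : Set (Finset S)) (F : Finset S) : Set (Finset S) :=
  {G | G ∈ K ∧ ¬F ⊆ G}

lemma faceDeletion_subset (K : Set (Finset S)) (F : Finset S) : faceDeletion K F ⊆ K :=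
  fun _ hG => hG.1

lemma faceDeletion_ne (hF : F ∈ K) : faceDeletion K F ≠ K :=
  fun h => (h.symm ▸ hF : F ∈ faceDeletion K F).2 subset_rfl

lemma IsSimplicialComplex.faceDeletion (hK : IsSimplicialComplex K) (hF : 1 < F.card) :
    IsSimplicialComplex (faceDeletion K F) := by
  obtain ⟨⟨G, hG⟩, hne, hdown⟩ := hK
  obtain ⟨v, hv⟩ := hne G hG
  refine ⟨⟨{v}, ?_, fun h => ?_⟩, fun H hH => hne H hH.1, fun H hH I hI hIH => ?_⟩
  · exact hdown G hG {v} (Finset.singleton_nonempty v) (Finset.singleton_subset_iff.mpr hv)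
  · exact hF.not_ge ((Finset.card_le_card h).trans_eq (Finset.card_singleton v))
  · exact ⟨hdown H hH.1 I hI hIH, fun h => hH.2 (h.trans hIH)⟩

lemma mem_realization_faceDeletion_iff :
    α ∈ realization (faceDeletion K F) ↔ α ∈ realization K ∧ ∃ s ∈ F, α s = 0 := by
  simp only [mem_realization_iff, faceDeletion, Set.mem_ofPred_eq, Finset.not_subset,
    Finsupp.notMem_support_iff, and_assoc]

lemma distToSet_realization_faceDeletion_le (hK : IsSimplicialComplex K) (hF : 1 < F.card)
    (hα : α ∈ realization K) :
    distToSet α (realization (faceDeletion K F)) ≤ 1 / (F.card : ℝ) := by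
  by_cases hzero : ∃ s ∈ F, α s = 0
  · rw [distToSet_eq_zero_of_mem (mem_realization_faceDeletion_iff.mpr ⟨hα, hzero⟩)]
    positivity
  · push Not at hzero
    obtain ⟨s, hsF, hs⟩ :=
      exists_mem_apply_le_degree_div_card hα.1 (Finset.card_pos.mp (one_pos.trans hF))
    obtain ⟨t, htF, hts⟩ := Finset.exists_mem_ne hF s
    have hβ : moveMass α s t ∈ realization (faceDeletion K F) :=
      mem_realization_faceDeletion_iff.mpr
        ⟨moveMass_mem_realization hK hα (Finsupp.mem_support_iff.mpr (hzero t htF)),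
          s, hsF, moveMass_apply_self α hts.symm⟩
    calc distToSet α (realization (faceDeletion K F)) ≤ l1dist α (moveMass α s t) :=
          distToSet_le_l1dist hβ
      _ = α s := by rw [l1dist_moveMass α hts.symm, abs_of_nonneg (hα.1 s)]
      _ ≤ α.degree / F.card := hs
      _ = 1 / (F.card : ℝ) := by rw [(mem_realization_iff.mp hα).2.1]

lemma le_distToSet_barycenter_faceDeletion (hK : IsSimplicialComplex K) (hF : 1 < F.card) :
    1 / (F.card : ℝ) ≤ distToSet (barycenter F) (realization (faceDeletion K F)) := by
  have hdegree := degree_barycenter (Finset.card_pos.mp (one_pos.trans hF))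
  refine le_csInf ((hK.faceDeletion hF).realization_nonempty.image _)
    (Set.forall_mem_image.mpr fun β hβ => ?_)
  obtain ⟨⟨-, hβ_degree, -⟩, s, hsF, hβs⟩ := mem_realization_faceDeletion_iff.mp hβ
  calc 1 / (F.card : ℝ) = barycenter F s - β s := by
        rw [barycenter_apply_of_mem hsF, hβs, sub_zero]
    _ ≤ l1dist (barycenter F) β := sub_apply_le_l1dist (hdegree.trans hβ_degree.symm) s

lemma hdelta_faceDeletion (hK : IsSimplicialComplex K) (hFK : F ∈ K) (hF : 1 < F.card) :
    hdelta K (faceDeletion K F) = 1 / (F.card : ℝ) := by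
  have hle : ∀ α ∈ realization K,
      distToSet α (realization (faceDeletion K F)) ≤ 1 / (F.card : ℝ) :=
    fun α => distToSet_realization_faceDeletion_le hK hF
  have hbary : distToSet (barycenter F) (realization (faceDeletion K F)) = 1 / (F.card : ℝ) :=
    (hle _ (barycenter_mem_realization hFK (hK.2.1 F hFK))).antisymm
      (le_distToSet_barycenter_faceDeletion hK hF)
  exact IsGreatest.csSup_eq
    ⟨⟨_, barycenter_mem_realization hFK (hK.2.1 F hFK), hbary⟩, Set.forall_mem_image.mpr hle⟩

theorem hdist_faceDeletion (hK : IsSimplicialComplex K) (hFK : F ∈ K) (hF : 1 < F.card) :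
    hdist K (faceDeletion K F) = 1 / (F.card : ℝ) := by
  rw [hdist, hdelta_faceDeletion hK hFK hF, hdelta_eq_zero_of_subset (faceDeletion_subset K F)]
  exact max_eq_left (by positivity)

end FaceDeletion

/-- Any infinite-dimensional simplicial complex is an accumulation point for
the Hausdorff distance: for all `n ≥ 1` there is a different complex within
distance `1/n` of it. -/
theorem stmt16 {S : Type*} (K : Set (Finset S)) (hK : IsSimplicialComplex K)
    (hinf : ∀ n : ℕ, ∃ F ∈ K, n ≤ F.card) :
    ∀ n : ℕ, 1 ≤ n → ∃ K' : Set (Finset S), IsSimplicialComplex K' ∧ K' ≠ K ∧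
      0 < hdist K K' ∧ hdist K K' ≤ 1 / (n : ℝ) := by
  intro n hn
  obtain ⟨F, hFK, hnF⟩ := hinf (n + 1)
  have hF : 1 < F.card := by lia
  refine ⟨faceDeletion K F, hK.faceDeletion hF, faceDeletion_ne hFK, ?_⟩
  rw [hdist_faceDeletion hK hFK hF]
  have hn_pos : (0 : ℝ) < n := Nat.cast_pos.mpr hn
  have hn_le : (n : ℝ) ≤ F.card := Nat.cast_le.mpr (by lia)
  exact ⟨one_div_pos.mpr (hn_pos.trans_le hn_le), one_div_le_one_div_of_le hn_pos hn_le⟩
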